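/- arXiv:2110.15940 — 4 statements merged into one kernel-verified Lean document; each statement's English description precedes it below -/
import Mathlib

section
/- Let k, N be natural numbers with 1 ≤ k < N and set n := N − k. Define det Φ := Σ_{σ ∈ S_k} sgn(σ) · ω^{1,σ(1)} ∧ ω^{2,σ(2)} ∧ ⋯ ∧ ω^{k,σ(k)} in Λ(V) (the entries ω^{ij} are degree-2 elements and pairwise commute, so the order of the factors is immaterial). Then (det Φ)^{n} = ((∏_{j=N−k}^{N−1} j!)/(∏_{j=0}^{k−1} j!)) · T in Λ(V). -/
noncomputable section

/-- The real vector space with basis `ψ_s^j` (inl) and `ψ̄_s^j` (inr),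
    `1 ≤ s ≤ n`, `1 ≤ j ≤ k`. -/
abbrev V (k n : ℕ) : Type := ((Fin n × Fin k) ⊕ (Fin n × Fin k)) → ℝ

/-- The fermionic variable `ψ_s^j` as a degree-1 element of the exterior algebra. -/
def ψ (k n : ℕ) (s : Fin n) (j : Fin k) : ExteriorAlgebra ℝ (V k n) :=
  ExteriorAlgebra.ι ℝ (Pi.single (Sum.inl (s, j)) (1 : ℝ))

/-- The fermionic variable `ψ̄_s^j` as a degree-1 element of the exterior algebra. -/
def ψb (k n : ℕ) (s : Fin n) (j : Fin k) : ExteriorAlgebra ℝ (V k n) :=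
  ExteriorAlgebra.ι ℝ (Pi.single (Sum.inr (s, j)) (1 : ℝ))

/-- `ω^{ij} = ∑_{s=1}^n ψ_s^i ∧ ψ̄_s^j`. -/
def ω (k n : ℕ) (i j : Fin k) : ExteriorAlgebra ℝ (V k n) :=
  ∑ s : Fin n, ψ k n s i * ψb k n s j

/-- `tr Φ = ∑_{i=1}^k ω^{ii}`. -/
def trPhi (k n : ℕ) : ExteriorAlgebra ℝ (V k n) :=
  ∑ i : Fin k, ω k n i i

/-- `tr(Φ²) = ∑_{i,j=1}^k ω^{ij} ∧ ω^{ji}`. -/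
def trPhi2 (k n : ℕ) : ExteriorAlgebra ℝ (V k n) :=
  ∑ i : Fin k, ∑ j : Fin k, ω k n i j * ω k n j i

/-- The top-degree generator `T = ∧_{s=1}^n (ψ_s^1 ∧ ψ̄_s^1 ∧ ⋯ ∧ ψ_s^k ∧ ψ̄_s^k)`. -/
def T (k n : ℕ) : ExteriorAlgebra ℝ (V k n) :=
  ((List.finRange n).map (fun s =>
    ((List.finRange k).map (fun j => ψ k n s j * ψb k n s j)).prod)).prod

/-- `det Φ = ∑_{σ ∈ S_k} sgn(σ) · ω^{1,σ(1)} ∧ ⋯ ∧ ω^{k,σ(k)}`. -/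
def detPhi (k n : ℕ) : ExteriorAlgebra ℝ (V k n) :=
  ∑ σ : Equiv.Perm (Fin k),
    ((Equiv.Perm.sign σ : ℤ) : ℝ) •
      ((List.finRange k).map (fun i => ω k n i (σ i))).prod

section absPart
open Polynomial

/-- All two-by-two permanents of the matrix vanish. -/
def PermRel {ι R : Type*} [CommRing R] (η : Matrix ι ι R) : Prop :=
  ∀ i j p q, η i j * η p q = -(η i q * η p j)

section abs
variable {ι R : Type*} [CommRing R]

lemma PermRel.row {η : Matrix ι ι R} (h : PermRel η) (h2 : IsUnit (2 : R)) (i j q : ι) :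
    η i j * η i q = 0 := by
  have := h i j i q
  rw [← h2.mul_right_eq_zero]
  linear_combination this

lemma PermRel.submatrix {κ : Type*} {η : Matrix ι ι R} (h : PermRel η) (f : κ → ι) :
    PermRel (η.submatrix f f) := fun _ _ _ _ => h _ _ _ _

lemma PermRel.map {S : Type*} [CommRing S] {η : Matrix ι ι R} (h : PermRel η) (f : R →+* S) :
    PermRel (η.map f) := fun i j p q => by
  simp only [Matrix.map_apply, ← map_mul, ← map_neg, h i j p q]

lemma PermRel.mul_left [Fintype ι] {η : Matrix ι ι R} (h : PermRel η) (M : Matrix ι ι R) :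
    PermRel (M * η) := fun i j p q => by
  simp only [Matrix.mul_apply, Finset.sum_mul_sum, ← Finset.sum_neg_distrib]
  refine Finset.sum_congr rfl fun a _ => Finset.sum_congr rfl fun b _ => ?_
  linear_combination M i a * M p b * h a j b q

lemma PermRel.perm [Fintype ι] [DecidableEq ι] {η : Matrix ι ι R} (h : PermRel η)
    (σ : Equiv.Perm ι) :
    ((Equiv.Perm.sign σ : ℤ) : R) * ∏ i, η (σ i) i = ∏ i, η i i := by
  induction σ using Equiv.Perm.swap_induction_on' with
  | one => simp
  | mul_swap f x y hxy ih =>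
    rw [← ih]
    have hy : y ∈ Finset.univ.erase x := by simp [hxy.symm]
    rw [← Finset.mul_prod_erase _ _ (Finset.mem_univ x), ← Finset.mul_prod_erase _ _ hy,
      ← Finset.mul_prod_erase Finset.univ (fun i => η (f i) i) (Finset.mem_univ x),
      ← Finset.mul_prod_erase _ (fun i => η (f i) i) hy]
    have : ∏ i ∈ (Finset.univ.erase x).erase y, η ((f * Equiv.swap x y) i) i
        = ∏ i ∈ (Finset.univ.erase x).erase y, η (f i) i := by
      refine Finset.prod_congr rfl fun i hi => ?_
      simp only [Finset.mem_erase] at hi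
      rw [Equiv.Perm.mul_apply, Equiv.swap_apply_of_ne_of_ne hi.2.1 hi.1]
    rw [this]
    simp only [Equiv.Perm.mul_apply, Equiv.swap_apply_left, Equiv.swap_apply_right,
      Equiv.Perm.sign_mul, Equiv.Perm.sign_swap hxy]
    push_cast
    linear_combination -((Equiv.Perm.sign f : ℤ) : R) *
      (∏ i ∈ (Finset.univ.erase x).erase y, η (f i) i) * h (f y) x (f x) y

lemma PermRel.det [Fintype ι] [DecidableEq ι] {η : Matrix ι ι R} (h : PermRel η) :
    η.det = ((Fintype.card ι).factorial : R) * ∏ i, η i i := by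
  rw [Matrix.det_apply']
  simp [h.perm, Fintype.card_perm]

lemma sum_pow_sq_zero [DecidableEq ι] (x : ι → R) (hx : ∀ i, x i * x i = 0) (s : Finset ι) :
    ∀ m : ℕ, (∑ i ∈ s, x i) ^ m = (m.factorial : R) * ∑ t ∈ s.powersetCard m, ∏ i ∈ t, x i := by
  induction s using Finset.induction_on with
  | empty =>
    intro m
    cases m with
    | zero => simp
    | succ m => rw [Finset.powersetCard_eq_empty.2 (by simp)]; simp
  | insert a s ha ih =>
    intro m
    cases m with
    | zero => simp
    | succ m =>
      have e : ∀ y : R, ∀ m : ℕ, (x a + y) ^ (m + 1) = y ^ (m + 1) + (m + 1) * x a * y ^ m := by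
        intro y m
        induction m with
        | zero => simp; ring
        | succ m ihm =>
          rw [pow_succ, ihm]; push_cast
          linear_combination (m + 1) * y ^ m * hx a
      rw [Finset.sum_insert ha, e, ih, ih, Finset.powersetCard_succ_insert ha,
        Finset.sum_union, Finset.sum_image]
      · have : ∑ t ∈ s.powersetCard m, ∏ i ∈ insert a t, x i
            = x a * ∑ t ∈ s.powersetCard m, ∏ i ∈ t, x i := by
          rw [Finset.mul_sum]
          refine Finset.sum_congr rfl fun t ht => ?_
          rw [Finset.prod_insert]
          exact fun h => ha ((Finset.mem_powersetCard.1 ht).1 h)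
        rw [this, Nat.factorial_succ]; push_cast; ring
      · intro t ht u hu htu
        have h1 : a ∉ t := fun h => ha ((Finset.mem_powersetCard.1 ht).1 h)
        have h2 : a ∉ u := fun h => ha ((Finset.mem_powersetCard.1 hu).1 h)
        rw [← Finset.erase_insert h1, htu, Finset.erase_insert h2]
      · rw [Finset.disjoint_left]
        intro t ht ht'
        obtain ⟨u, _, rfl⟩ := Finset.mem_image.1 ht'
        exact ha ((Finset.mem_powersetCard.1 ht).1 (Finset.mem_insert_self a u))

variable [Fintype ι] [DecidableEq ι]

lemma coeff_det_one {η : Matrix ι ι R} (h : PermRel η) (h2 : IsUnit (2 : R)) (m : ℕ) :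
    (Matrix.det (1 + (X : R[X]) • η.map C)).coeff m = η.trace ^ m := by
  rw [Matrix.coeff_det_one_add_X_smul_eq_sum_minors, Matrix.trace,
    sum_pow_sq_zero η.diag (fun i => h.row h2 i i i), Finset.mul_sum]
  refine Finset.sum_congr rfl fun t ht => ?_
  rw [(h.submatrix _).det, Fintype.card_coe, (Finset.mem_powersetCard.1 ht).2]
  simp only [Matrix.submatrix_apply, Matrix.diag_apply]
  rw [Finset.prod_coe_sort t (fun i => η i i)]

lemma coeff_det_one_pow {η : Matrix ι ι R} (h : PermRel η) (h2 : IsUnit (2 : R)) (s m : ℕ) :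
    (Matrix.det (1 + (X : R[X]) • η.map C) ^ (s + 1)).coeff m
      = ((s + m).choose m : R) * η.trace ^ m := by
  set D := Matrix.det (1 + (X : R[X]) • η.map C) with hD
  have hc : ∀ m, D.coeff m = η.trace ^ m := coeff_det_one h h2
  have hD1 : D = 1 + C η.trace * (D * X) := by
    ext m
    cases m with
    | zero => simp [hc]
    | succ m => simp [hc, coeff_one, pow_succ']
  induction s generalizing m with
  | zero => simp [hc]
  | succ s ihs =>
    have hs : D ^ (s + 1 + 1) = D ^ (s + 1) + C η.trace * (D ^ (s + 1 + 1) * X) := by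
      linear_combination D ^ (s + 1) * hD1
    induction m with
    | zero =>
      rw [hs]; simp only [coeff_add, coeff_C_mul, coeff_mul_X_zero, ihs]; simp
    | succ m ihm =>
      rw [hs]; simp only [coeff_add, coeff_C_mul, coeff_mul_X, ihs, ihm]
      rw [show s + 1 + (m + 1) = (s + 1 + m) + 1 by ring, Nat.choose_succ_succ,
        show s + (m + 1) = s + 1 + m by ring]
      push_cast; ring

lemma trace_pow_card {η : Matrix ι ι R} (h : PermRel η) (h2 : IsUnit (2 : R)) :
    η.trace ^ (Fintype.card ι) = η.det := by
  rw [h.det, Matrix.trace, sum_pow_sq_zero η.diag (fun i => h.row h2 i i i), ← Finset.card_univ,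
    Finset.powersetCard_self]
  simp

lemma coeff_unit {X₀ η : Matrix ι ι R} (hX : IsUnit X₀.det) (h : PermRel η)
    (h2 : IsUnit (2 : R)) (s : ℕ) :
    (Matrix.det (X₀.map C + (X : R[X]) • η.map C) ^ (s + 1)).coeff (Fintype.card ι)
      = ((s + Fintype.card ι).choose (Fintype.card ι) : R) * (X₀.det ^ s * η.det) := by
  have e : X₀.map C + (X : R[X]) • η.map C
      = X₀.map C * (1 + (X : R[X]) • (X₀⁻¹ * η).map C) := by
    rw [Matrix.map_mul, mul_add, mul_one, Matrix.mul_smul, ← Matrix.mul_assoc, ← Matrix.map_mul,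
      Matrix.mul_nonsing_inv _ hX]
    simp
  have e2 : (X₀.map (C : R →+* R[X])).det = C X₀.det := by
    rw [← RingHom.mapMatrix_apply, ← RingHom.map_det]
  rw [e, Matrix.det_mul, mul_pow, e2, ← C_pow, coeff_C_mul,
    coeff_det_one_pow (h.mul_left _) h2, trace_pow_card (h.mul_left _) h2, Matrix.det_mul]
  have := Matrix.det_nonsing_inv_mul_det X₀ hX
  linear_combination ((s + Fintype.card ι).choose (Fintype.card ι) : R) * X₀.det ^ s * η.det * this

lemma map_coeff_aux {S : Type*} [CommRing S] (f : R →+* S) (X₀ η : Matrix ι ι R) (s m : ℕ) :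
    f ((Matrix.det (X₀.map C + (X : R[X]) • η.map C) ^ s).coeff m)
     = (Matrix.det ((X₀.map f).map C + (X : S[X]) • (η.map f).map C) ^ s).coeff m := by
  rw [← Polynomial.coeff_map, Polynomial.map_pow, ← coe_mapRingHom, RingHom.map_det]
  congr 3
  ext i j : 1
  simp

lemma coeff_gen (X₀ η : Matrix ι ι R) (h : PermRel η)
    (h2 : IsUnit (2 : R)) (s : ℕ) :
    (Matrix.det (X₀.map C + (X : R[X]) • η.map C) ^ (s + 1)).coeff (Fintype.card ι)
      = ((s + Fintype.card ι).choose (Fintype.card ι) : R) * (X₀.det ^ s * η.det) := by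
  set Y : Matrix ι ι R[X] := Matrix.charmatrix (-X₀) with hY
  have hm : Y.det.Monic := Matrix.charpoly_monic (-X₀)
  have key : (Matrix.det (Y.map C + (X : R[X][X]) • (η.map C).map C) ^ (s + 1)).coeff
      (Fintype.card ι)
      = ((s + Fintype.card ι).choose (Fintype.card ι) : R[X]) * (Y.det ^ s * (η.map C).det) := by
    have inj : Function.Injective (algebraMap R[X] (Localization.Away Y.det)) :=
      IsLocalization.injective _ (M := Submonoid.powers Y.det)
        (by rw [Submonoid.powers_le]; exact hm.mem_nonZeroDivisors)
    apply inj
    have hu : IsUnit (Y.map (algebraMap R[X] (Localization.Away Y.det))).det := by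
      rw [← RingHom.mapMatrix_apply, ← RingHom.map_det]
      exact IsLocalization.Away.algebraMap_isUnit _
    rw [map_coeff_aux, coeff_unit hu ((h.map C).map _)]
    · simp only [map_mul, map_natCast, map_pow, RingHom.map_det, RingHom.mapMatrix_apply]
    · have := (h2.map (C : R →+* R[X])).map (algebraMap R[X] (Localization.Away Y.det))
      rwa [map_ofNat, map_ofNat] at this
  have k2 := congrArg (evalRingHom (0 : R)) key
  rw [map_coeff_aux] at k2
  have a1 : Y.map (evalRingHom (0 : R)) = X₀ := by
    ext i j
    by_cases hij : i = j
    · subst hij; simp [hY, Matrix.charmatrix_apply_eq]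
    · simp [hY, Matrix.charmatrix_apply_ne _ _ _ hij]
  have a2 : (η.map C).map (evalRingHom (0 : R)) = η := by
    ext i j; simp
  simp only [map_mul, map_natCast, map_pow, RingHom.map_det, RingHom.mapMatrix_apply] at k2
  rw [a1, a2] at k2
  exact k2


lemma nil_sum {κ S : Type*} [CommSemiring S] [DecidableEq κ] (x : κ → S) (c : ℕ)
    (t : Finset κ) (hx : ∀ i ∈ t, x i ^ (c + 1) = 0) : (∑ i ∈ t, x i) ^ (c * t.card + 1) = 0 := by
  induction t using Finset.induction_on with
  | empty => simp
  | insert a t ha ih =>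
    have ih := ih fun i hi => hx i (Finset.mem_insert_of_mem hi)
    have h1 := hx a (Finset.mem_insert_self a t)
    rw [Finset.sum_insert ha, Finset.card_insert_of_notMem ha, add_pow]
    refine Finset.sum_eq_zero fun m hm => ?_
    rcases le_or_gt (c + 1) m with hle | hlt
    · rw [pow_eq_zero_of_le hle h1]; simp
    · rw [pow_eq_zero_of_le (m := c * t.card + 1) (by
        have : c * (t.card + 1) = c * t.card + c := by ring
        omega) ih]
      simp

/-- The ideal of the entries. -/
def entIdeal (η : Matrix ι ι R) : Ideal R := ∑ i, Ideal.span (Set.range fun j => η i j)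

lemma mem_entIdeal (η : Matrix ι ι R) (i j : ι) : η i j ∈ entIdeal η := by
  have : Ideal.span (Set.range fun j => η i j) ≤ entIdeal η := by
    rw [entIdeal, Ideal.sum_eq_sup]
    exact Finset.le_sup (f := fun i => Ideal.span (Set.range fun j => η i j)) (Finset.mem_univ i)
  exact this (Ideal.subset_span ⟨j, rfl⟩)

lemma entIdeal_pow {η : Matrix ι ι R} (h : PermRel η) (h2 : IsUnit (2 : R)) :
    entIdeal η ^ (Fintype.card ι + 1) = 0 := by
  have := nil_sum (fun i => Ideal.span (Set.range fun j => η i j)) 1 Finset.univ (fun i _ => by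
    rw [show 1 + 1 = 2 from rfl, pow_two, Ideal.span_mul_span', Ideal.zero_eq_bot,
      Ideal.span_eq_bot]
    rintro x ⟨_, ⟨j, rfl⟩, _, ⟨q, rfl⟩, rfl⟩
    exact h.row h2 i j q)
  simpa [entIdeal] using this

/-- Filtration on polynomials. -/
def Filt (J : Ideal R) (m : ℕ) (p : R[X]) : Prop := ∀ j, p.coeff j ∈ J ^ (m - j)

lemma Filt.mul {J : Ideal R} {a b : ℕ} {p q : R[X]} (hp : Filt J a p) (hq : Filt J b q) :
    Filt J (a + b) (p * q) := fun j => by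
  rw [coeff_mul]
  refine Ideal.sum_mem _ fun x hx => ?_
  have hx := Finset.HasAntidiagonal.mem_antidiagonal.1 hx
  have := Ideal.mul_mem_mul (hp x.1) (hq x.2)
  rw [← pow_add] at this
  exact Ideal.pow_le_pow_right (by omega) this

lemma Filt.zero (J : Ideal R) (p : R[X]) : Filt J 0 p := fun j => by simp

lemma Filt.prod {κ : Type*} [DecidableEq κ] {J : Ideal R} (t : Finset κ) (f : κ → R[X])
    (hf : ∀ i, Filt J 1 (f i)) : Filt J t.card (∏ i ∈ t, f i) := by
  induction t using Finset.induction_on with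
  | empty => exact Filt.zero _ _
  | insert a t ha ih =>
    rw [Finset.prod_insert ha, Finset.card_insert_of_notMem ha, add_comm]
    exact (hf a).mul ih

lemma Filt.pow {J : Ideal R} {a : ℕ} {p : R[X]} (hp : Filt J a p) (n : ℕ) :
    Filt J (a * n) (p ^ n) := by
  induction n with
  | zero => exact Filt.zero _ _
  | succ n ih => rw [pow_succ, mul_add, mul_one]; exact ih.mul hp

lemma Filt.det {J : Ideal R} (M : Matrix ι ι R[X]) (hM : ∀ i j, Filt J 1 (M i j)) :
    Filt J (Fintype.card ι) M.det := fun j => by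
  rw [Matrix.det_apply', finsetSum_coeff]
  refine Ideal.sum_mem _ fun σ _ => ?_
  have := (Filt.zero J ((Equiv.Perm.sign σ : ℤ) : R[X])).mul
    (Filt.prod Finset.univ (fun i => M (σ i) i) fun i => hM _ _)
  rw [zero_add] at this
  exact this j

lemma step {X₀ η : Matrix ι ι R} (h : PermRel η) (h2 : IsUnit (2 : R)) (s : ℕ) {J : Ideal R}
    (hJ : ∀ i j, X₀ i j ∈ J) (hJ0 : J ^ (Fintype.card ι * s + 1) = 0) :
    Matrix.det (X₀ + η) ^ (s + 1)
      = ((s + Fintype.card ι).choose (Fintype.card ι) : R) * (X₀.det ^ s * η.det) := by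
  rw [← coeff_gen X₀ η h h2]
  set P := Matrix.det (X₀.map C + (X : R[X]) • η.map C) ^ (s + 1) with hP
  have he : Matrix.det (X₀ + η) ^ (s + 1) = P.eval 1 := by
    rw [hP, ← coe_evalRingHom, map_pow, RingHom.map_det]
    congr 2
    ext i j
    simp
  have hm : P = monomial (Fintype.card ι) (P.coeff (Fintype.card ι)) := by
    ext j
    rw [coeff_monomial]
    split_ifs with hj
    · rw [hj]
    · rcases lt_or_gt_of_ne hj with hlt | hgt
      · have : P ∈ reesAlgebra (entIdeal η) := by
          refine pow_mem ?_ _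
          rw [Matrix.det_apply']
          refine sum_mem fun σ _ => mul_mem (intCast_mem _ _) (prod_mem fun i _ => ?_)
          rw [Matrix.add_apply, Matrix.smul_apply, Matrix.map_apply, Matrix.map_apply]
          refine add_mem (algebraMap_mem _ (X₀ (σ i) i)) ?_
          rw [smul_eq_mul, mul_comm, C_mul_X_eq_monomial]
          exact reesAlgebra.monomial_mem.2 (by simpa using mem_entIdeal η _ _)
        have h3 := (mem_reesAlgebra_iff _ _).1 this j
        rw [pow_eq_zero_of_le hlt (entIdeal_pow h h2)] at h3
        simpa using h3
      · have : Filt J (Fintype.card ι * (s + 1)) P := by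
          refine (Filt.det _ fun i l => ?_).pow _
          rintro (_ | j)
          · simpa using hJ i l
          · simp
        have h3 := this j
        rw [pow_eq_zero_of_le (by rw [mul_add]; omega) hJ0] at h3
        simpa using h3
  rw [he]
  nth_rewrite 1 [hm]
  simp

theorem abs_main (h2 : IsUnit (2 : R)) (n : ℕ) (η : Fin n → Matrix ι ι R)
    (h : ∀ s, PermRel (η s)) :
    (∑ s, η s).det ^ n = ((∏ s ∈ Finset.range n, ((s + Fintype.card ι).choose (Fintype.card ι)
      * (Fintype.card ι).factorial) : ℕ) : R) * ∏ s, ∏ i, η s i i := by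
  induction n with
  | zero => simp
  | succ n ih =>
    have hJ0 := nil_sum (fun s : Fin n => entIdeal (η s.castSucc)) (Fintype.card ι) Finset.univ
      (fun s _ => entIdeal_pow (h _) h2)
    rw [Finset.card_univ, Fintype.card_fin] at hJ0
    rw [Fin.sum_univ_castSucc, step (h (Fin.last n)) h2 n _ hJ0, ih _ (fun s => h _),
      (h (Fin.last n)).det, Finset.prod_range_succ, Fin.prod_univ_castSucc]
    · push_cast; ring
    · intro i j
      rw [Matrix.sum_apply]
      refine Ideal.sum_mem _ fun s _ => ?_
      rw [Ideal.sum_eq_sup]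
      exact Finset.le_sup (f := fun s : Fin n => entIdeal (η s.castSucc)) (Finset.mem_univ s)
        (mem_entIdeal _ _ _)

end abs

end absPart

lemma const_aux (k n : ℕ) :
    (∏ s ∈ Finset.range n, ((s + k).choose k * k.factorial)) * ∏ j ∈ Finset.range k, j.factorial
      = ∏ j ∈ Finset.Ico n (n + k), j.factorial := by
  induction n with
  | zero => simp [Nat.Ico_zero_eq_range]
  | succ n ih =>
    have h1 : n.factorial * ∏ j ∈ Finset.Ico (n + 1) (n + 1 + k), j.factorial
        = (∏ j ∈ Finset.Ico n (n + k), j.factorial) * (n + k).factorial := by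
      rw [← Finset.prod_Ico_succ_top (f := fun j => j.factorial) (show n ≤ n + k by omega),
        Finset.prod_eq_prod_Ico_succ_bot (f := fun j => j.factorial) (show n < n + k + 1 by omega),
        show n + k + 1 = n + 1 + k by ring]
    have h2 := Nat.add_choose_mul_factorial_mul_factorial n k
    apply Nat.eq_of_mul_eq_mul_left n.factorial_pos
    rw [h1, ← ih, Finset.prod_range_succ, ← h2]
    ring

lemma ι_anti {M : Type*} [AddCommGroup M] [Module ℝ M] (x y : M) :
    ExteriorAlgebra.ι ℝ x * ExteriorAlgebra.ι ℝ y
      = -(ExteriorAlgebra.ι ℝ y * ExteriorAlgebra.ι ℝ x) :=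
  eq_neg_of_add_eq_zero_left (ExteriorAlgebra.ι_add_mul_swap x y)

lemma anti_comm {A : Type*} [Ring A] {a b c d : A} (hac : a * c = -(c * a))
    (hbc : b * c = -(c * b)) (had : a * d = -(d * a)) (hbd : b * d = -(d * b)) :
    a * b * (c * d) = c * d * (a * b) := by
  calc a * b * (c * d) = a * (b * c) * d := by noncomm_ring
    _ = -((a * c) * (b * d)) := by rw [hbc]; noncomm_ring
    _ = -(c * (a * d) * b) := by rw [hac, hbd]; noncomm_ring
    _ = _ := by rw [had]; noncomm_ring

lemma anti_rel {A : Type*} [Ring A] {a b c d : A} (hbc : b * c = -(c * b))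
    (hbd : b * d = -(d * b)) (hcd : c * d = -(d * c)) :
    a * b * (c * d) = -(a * d * (c * b)) := by
  calc a * b * (c * d) = a * (b * c) * d := by noncomm_ring
    _ = -(a * c * (b * d)) := by rw [hbc]; noncomm_ring
    _ = a * (c * d) * b := by rw [hbd]; noncomm_ring
    _ = _ := by rw [hcd]; noncomm_ring

/-- The commutative subalgebra generated by the bilinears. -/
abbrev EvenA (k n : ℕ) : Subalgebra ℝ (ExteriorAlgebra ℝ (V k n)) :=
  Algebra.adjoin ℝ (Set.range fun p : Fin n × Fin k × Fin k => ψ k n p.1 p.2.1 * ψb k n p.1 p.2.2)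

instance evenA_comm (k n : ℕ) : IsMulCommutative (EvenA k n) := by
  apply Algebra.isMulCommutative_adjoin
  rintro _ ⟨p, rfl⟩ _ ⟨q, rfl⟩
  exact anti_comm (ι_anti _ _) (ι_anti _ _) (ι_anti _ _) (ι_anti _ _)

/-- The matrix of bilinears of flavour `s`. -/
def ηM (k n : ℕ) (s : Fin n) : Matrix (Fin k) (Fin k) (EvenA k n) := fun i j =>
  ⟨ψ k n s i * ψb k n s j, Algebra.subset_adjoin ⟨(s, i, j), rfl⟩⟩

open scoped IsMulCommutative in
lemma main_even (k n : ℕ) :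
    (∑ s, ηM k n s).det ^ n = ((∏ s ∈ Finset.range n, ((s + k).choose k * k.factorial) : ℕ) :
      EvenA k n) * ∏ s, ∏ i, ηM k n s i i := by
  have h2 : IsUnit (2 : EvenA k n) := by
    have := (isUnit_iff_ne_zero.2 (two_ne_zero : (2 : ℝ) ≠ 0)).map (algebraMap ℝ (EvenA k n))
    rwa [map_ofNat] at this
  have := abs_main h2 n (ηM k n) (fun s i j p q => by
    apply Subtype.ext
    exact anti_rel (ι_anti _ _) (ι_anti _ _) (ι_anti _ _))
  simpa using this

open scoped IsMulCommutative in
lemma coe_det (k n : ℕ) : (((∑ s, ηM k n s).det : EvenA k n) : ExteriorAlgebra ℝ (V k n))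
    = detPhi k n := by
  rw [← Matrix.det_transpose, Matrix.det_apply', detPhi]
  rw [← Subalgebra.coe_val, map_sum]
  refine Finset.sum_congr rfl fun σ _ => ?_
  rw [map_mul, map_intCast, ← List.prod_ofFn, map_list_prod, List.map_ofFn, List.ofFn_eq_map,
    Algebra.smul_def, map_intCast]
  congr 2
  refine List.map_congr_left fun i _ => ?_
  rw [Function.comp_apply, Matrix.transpose_apply, Matrix.sum_apply, map_sum]
  rfl

open scoped IsMulCommutative in
lemma coe_T (k n : ℕ) : ((∏ s, ∏ i, ηM k n s i i : EvenA k n) : ExteriorAlgebra ℝ (V k n))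
    = T k n := by
  rw [T, ← Subalgebra.coe_val, ← List.prod_ofFn, map_list_prod, List.map_ofFn, List.ofFn_eq_map]
  refine congrArg List.prod (List.map_congr_left fun s _ => ?_)
  rw [Function.comp_apply, ← List.prod_ofFn, map_list_prod, List.map_ofFn, List.ofFn_eq_map]
  rfl

/-- `(det Φ)^n = (∏_{j=N−k}^{N−1} j! / ∏_{j=0}^{k−1} j!) · T`. -/
theorem detPhi_pow (k N n : ℕ) (hk : 1 ≤ k) (hN : k < N) (hn : n = N - k) :
    (detPhi k n) ^ n =
      ((∏ j ∈ Finset.Ico (N - k) N, (j.factorial : ℝ)) /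
        (∏ j ∈ Finset.range k, (j.factorial : ℝ))) • T k n := by
  obtain rfl : N = n + k := by omega
  have h := congrArg (fun x : EvenA k n => (x : ExteriorAlgebra ℝ (V k n))) (main_even k n)
  have hc := congrArg (fun m : ℕ => (m : ℝ)) (const_aux k n)
  simp only [Nat.cast_mul, Nat.cast_prod] at hc
  have h0 : (∏ j ∈ Finset.range k, (j.factorial : ℝ)) ≠ 0 :=
    Finset.prod_ne_zero_iff.2 fun j _ => by positivity
  simp only [Subalgebra.coe_pow, Subalgebra.coe_mul, coe_det, coe_T] at h
  rw [h, Nat.add_sub_cancel, ← hc, mul_div_cancel_right₀ _ h0, Algebra.smul_def]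
  congr 1
  have e : (algebraMap ℝ (ExteriorAlgebra ℝ (V k n)))
      (((∏ s ∈ Finset.range n, ((s + k).choose k * k.factorial) : ℕ)) : ℝ)
      = (((∏ s ∈ Finset.range n, ((s + k).choose k * k.factorial) : ℕ)) :
        ExteriorAlgebra ℝ (V k n)) := map_natCast _ _
  rw [Nat.cast_prod] at e
  simp only [Nat.cast_mul] at e
  rw [e]
  rfl
end
end

section
/- Let k, N be natural numbers with 1 ≤ k < N, n := N − k, and assume kn ≥ 4. Then in Λ(V): (tr Φ)^{kn−4} ∧ (tr(Φ²))² = (kn−4)! · k · n · [k·n³ − 2·n²·(k² + 2) + n·(k³ + 10k) − 4k² − 2] · T. (This is the evaluation of the fermion integral P₂ = ∫Dψ (tr Φ)^{kN−k²−4} (tr(Φ²))².) -/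
noncomputable section

abbrev dd (k n : ℕ) (s : Fin n) (j : Fin k) :
    ExteriorAlgebra ℝ (V k n) →ₗ[ℝ] ExteriorAlgebra ℝ (V k n) :=
  CliffordAlgebra.contractLeft (Q := (0 : QuadraticForm ℝ (V k n)))
    (LinearMap.proj (Sum.inl (s, j)) : Module.Dual ℝ (V k n))

abbrev EE (k n : ℕ) := ExteriorAlgebra ℝ (V k n)

theorem pair_comm (k n : ℕ) (a b : V k n) (y : EE k n) :
    ExteriorAlgebra.ι ℝ a * ExteriorAlgebra.ι ℝ b * y =
      y * (ExteriorAlgebra.ι ℝ a * ExteriorAlgebra.ι ℝ b) := by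
  have sw : ∀ u v : V k n, ExteriorAlgebra.ι ℝ u * ExteriorAlgebra.ι ℝ v =
      - (ExteriorAlgebra.ι ℝ v * ExteriorAlgebra.ι ℝ u) := fun u v =>
    eq_neg_of_add_eq_zero_left (ExteriorAlgebra.ι_add_mul_swap u v)
  induction y using ExteriorAlgebra.induction with
  | algebraMap r => exact (Algebra.commutes r _).symm
  | ι c =>
    rw [mul_assoc, sw b c, mul_neg, ← mul_assoc, sw a c]
    simp [mul_assoc]
  | mul x y hx hy => rw [← mul_assoc, hx, mul_assoc, hy, ← mul_assoc]
  | add x y hx hy => rw [mul_add, add_mul, hx, hy]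

theorem ω_comm (k n : ℕ) (i j : Fin k) (y : EE k n) : ω k n i j * y = y * ω k n i j := by
  unfold ω ψ ψb
  rw [Finset.sum_mul, Finset.mul_sum]
  exact Finset.sum_congr rfl fun s _ => pair_comm k n _ _ y

theorem X_comm (k n : ℕ) (y : EE k n) : trPhi k n * y = y * trPhi k n := by
  unfold trPhi
  rw [Finset.sum_mul, Finset.mul_sum]
  exact Finset.sum_congr rfl fun s _ => ω_comm k n _ _ y

theorem dd_ψ (k n : ℕ) (s t : Fin n) (j i : Fin k) (y : EE k n) :
    dd k n s j (ψ k n t i * y) =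
      (if t = s ∧ i = j then (1 : ℝ) else 0) • y - ψ k n t i * dd k n s j y := by
  unfold ψ
  refine (CliffordAlgebra.contractLeft_ι_mul _ _ _).trans ?_
  congr 2
  simp [Pi.single_apply, Prod.ext_iff, eq_comm]

theorem dd_ψb (k n : ℕ) (s t : Fin n) (j i : Fin k) (y : EE k n) :
    dd k n s j (ψb k n t i * y) = - (ψb k n t i * dd k n s j y) := by
  unfold ψb
  refine (CliffordAlgebra.contractLeft_ι_mul _ _ _).trans ?_
  simp [ExteriorAlgebra.ι]

theorem dd_ω (k n : ℕ) (s : Fin n) (j a b : Fin k) (y : EE k n) :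
    dd k n s j (ω k n a b * y) =
      (if a = j then (1 : ℝ) else 0) • (ψb k n s b * y) + ω k n a b * dd k n s j y := by
  unfold ω
  simp only [Finset.sum_mul, map_sum, mul_assoc, dd_ψ, dd_ψb]
  simp only [mul_neg, sub_neg_eq_add, Finset.sum_add_distrib]
  congr 1
  by_cases h : a = j <;> simp [h, ite_smul]

theorem dd_X (k n : ℕ) (s : Fin n) (j : Fin k) (y : EE k n) :
    dd k n s j (trPhi k n * y) = ψb k n s j * y + trPhi k n * dd k n s j y := by
  unfold trPhi
  simp only [Finset.sum_mul, map_sum, dd_ω, Finset.sum_add_distrib]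
  simp [ite_smul]

theorem dd_Xpow (k n : ℕ) (s : Fin n) (j : Fin k) (m : ℕ) (y : EE k n) :
    dd k n s j (trPhi k n ^ (m + 1) * y) =
      ((m : ℝ) + 1) • (trPhi k n ^ m * (ψb k n s j * y)) +
        trPhi k n ^ (m + 1) * dd k n s j y := by
  induction m generalizing y with
  | zero => simpa using dd_X k n s j y
  | succ m ih =>
    rw [pow_succ, mul_assoc, ih, dd_X, mul_add, ← mul_assoc (ψb k n s j), ← X_comm,
      mul_assoc, ← mul_assoc (_ ^ m), ← pow_succ, ← mul_assoc (_ ^ (m+1)) (trPhi k n),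
      ← pow_succ, ← add_assoc]
    congr 1
    push_cast
    module

/-- The derivation. -/
def DD (k n : ℕ) (i j : Fin k) : EE k n →ₗ[ℝ] EE k n :=
  ∑ s, (LinearMap.mulLeft ℝ (ψ k n s i)) ∘ₗ dd k n s j

theorem DD_apply (k n : ℕ) (i j : Fin k) (y : EE k n) :
    DD k n i j y = ∑ s, ψ k n s i * dd k n s j y := by
  simp [DD]

theorem DD_one (k n : ℕ) (i j : Fin k) : DD k n i j 1 = 0 := by
  rw [DD_apply]
  refine Finset.sum_eq_zero fun s _ => ?_
  have : dd k n s j 1 = 0 := CliffordAlgebra.contractLeft_one _ _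
  rw [this, mul_zero]

theorem DD_ω_mul (k n : ℕ) (i j a b : Fin k) (y : EE k n) :
    DD k n i j (ω k n a b * y) =
      (if a = j then (1 : ℝ) else 0) • (ω k n i b * y) + ω k n a b * DD k n i j y := by
  simp only [DD_apply, dd_ω, mul_add, Finset.sum_add_distrib, mul_smul_comm]
  congr 1
  · rw [← Finset.smul_sum]
    simp only [← mul_assoc, ← Finset.sum_mul]
    rfl
  · rw [Finset.mul_sum]
    refine Finset.sum_congr rfl fun s _ => ?_
    rw [← mul_assoc, ← mul_assoc, ω_comm]

theorem DD_ω (k n : ℕ) (i j a b : Fin k) :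
    DD k n i j (ω k n a b) = (if a = j then (1 : ℝ) else 0) • (ω k n i b) := by
  have := DD_ω_mul k n i j a b 1
  simpa only [mul_one, DD_one, mul_zero, add_zero] using this

theorem ψ_mem (k n : ℕ) (s : Fin n) (i : Fin k) : ψ k n s i ∈ ⋀[ℝ]^1 (V k n) := by
  rw [ExteriorAlgebra.exteriorPower, pow_one]; exact LinearMap.mem_range_self _ _

theorem ψb_mem (k n : ℕ) (s : Fin n) (i : Fin k) : ψb k n s i ∈ ⋀[ℝ]^1 (V k n) := by
  rw [ExteriorAlgebra.exteriorPower, pow_one]; exact LinearMap.mem_range_self _ _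

theorem mul_mem' (k n a b : ℕ) {x y : EE k n} (hx : x ∈ ⋀[ℝ]^a (V k n))
    (hy : y ∈ ⋀[ℝ]^b (V k n)) : x * y ∈ ⋀[ℝ]^(a + b) (V k n) := by
  rw [ExteriorAlgebra.exteriorPower, pow_add]; exact Submodule.mul_mem_mul hx hy

theorem ω_mem (k n : ℕ) (i j : Fin k) : ω k n i j ∈ ⋀[ℝ]^2 (V k n) :=
  Submodule.sum_mem _ fun s _ => mul_mem' k n 1 1 (ψ_mem k n s i) (ψb_mem k n s j)

theorem X_mem (k n : ℕ) : trPhi k n ∈ ⋀[ℝ]^2 (V k n) :=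
  Submodule.sum_mem _ fun s _ => ω_mem k n _ _

theorem Xpow_mem (k n m : ℕ) : trPhi k n ^ m ∈ ⋀[ℝ]^(2 * m) (V k n) := by
  rw [ExteriorAlgebra.exteriorPower, pow_mul]; exact Submodule.pow_mem_pow _ (X_mem k n) m

theorem top_zero (k n d : ℕ) (hd : 2 * (k * n) < d) {x : EE k n}
    (hx : x ∈ ⋀[ℝ]^d (V k n)) : x = 0 := by
  have h : Module.finrank ℝ (⋀[ℝ]^d (V k n)) = 0 := by
    rw [exteriorPower.finrank_eq, Nat.choose_eq_zero_of_lt]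
    simp
    nlinarith [mul_comm k n]
  have h2 := Module.finrank_zero_iff.mp h
  have := h2.elim ⟨x, hx⟩ 0
  simpa using this

theorem rule (k n m r : ℕ) (hmr : m + 1 + r = k * n) (i j : Fin k) (y : EE k n)
    (hy : y ∈ ⋀[ℝ]^(2 * r) (V k n)) :
    ((m : ℝ) + 1) • (trPhi k n ^ m * (ω k n i j * y)) =
      trPhi k n ^ (m + 1) * ((if i = j then (n : ℝ) else 0) • y - DD k n i j y) := by
  have key : ∀ s : Fin n, ((m : ℝ) + 1) • (trPhi k n ^ m * ((ψ k n s i * ψb k n s j) * y)) =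
      trPhi k n ^ (m + 1) * ((if i = j then (1 : ℝ) else 0) • y - ψ k n s i * dd k n s j y) := by
    intro s
    have hz : trPhi k n ^ (m + 1) * (ψ k n s i * y) = 0 := by
      refine top_zero k n (2 * (m + 1) + (1 + 2 * r)) (by omega) ?_
      exact mul_mem' k n _ _ (Xpow_mem k n _) (mul_mem' k n _ _ (ψ_mem k n s i) hy)
    have h := dd_Xpow k n s j m (ψ k n s i * y)
    rw [hz, map_zero, dd_ψ] at h
    have sw : ψb k n s j * (ψ k n s i * y) = - ((ψ k n s i * ψb k n s j) * y) := by
      rw [← mul_assoc, ← neg_mul]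
      congr 1
      exact eq_neg_of_add_eq_zero_left (ExteriorAlgebra.ι_add_mul_swap _ _)
    rw [sw, mul_neg, smul_neg] at h
    simp only [true_and] at h
    exact (eq_of_sub_eq_zero (by rw [sub_eq_neg_add]; exact h.symm)).symm
  have := Finset.sum_congr (rfl : (Finset.univ : Finset (Fin n)) = _) fun s _ => key s
  rw [← Finset.smul_sum, ← Finset.mul_sum, ← Finset.sum_mul, ← Finset.mul_sum,
    Finset.sum_sub_distrib, ← DD_apply] at this
  refine this.trans ?_
  congr 2
  rw [Finset.sum_const, Finset.card_univ, Fintype.card_fin, ← Nat.cast_smul_eq_nsmul ℝ, smul_smul]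
  split_ifs <;> simp

theorem add_pow_sq_zero {A : Type*} [Ring A] (x S : A) (hx : x * x = 0) (h : x * S = S * x)
    (p : ℕ) : (x + S) ^ (p + 1) = S ^ (p + 1) + (p + 1) • (x * S ^ p) := by
  induction p with
  | zero => simp [add_comm]
  | succ p ih =>
    have h1 : S * (x * S ^ p) = x * S ^ (p + 1) := by
      rw [← mul_assoc, ← h, mul_assoc, ← pow_succ']
    have h2 : x * (x * S ^ p) = 0 := by rw [← mul_assoc, hx, zero_mul]
    rw [pow_succ', ih, add_mul, mul_add, mul_add, mul_smul_comm, mul_smul_comm, h1, h2,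
      smul_zero, ← pow_succ', add_zero, succ_nsmul _ (p + 1)]
    abel

theorem list_pow {A : Type*} [Ring A] (l : List A) (h0 : ∀ x ∈ l, x * x = 0)
    (hc : ∀ x ∈ l, ∀ y, x * y = y * x) :
    l.sum ^ l.length = l.length.factorial • l.prod ∧ l.sum ^ (l.length + 1) = 0 := by
  induction l with
  | nil => simp
  | cons x l ih =>
    obtain ⟨h1, h2⟩ := ih (fun y hy => h0 y (List.mem_cons_of_mem _ hy))
      (fun y hy => hc y (List.mem_cons_of_mem _ hy))
    have hx := h0 x List.mem_cons_self
    have hxc := hc x List.mem_cons_self l.sum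
    rw [List.sum_cons, List.length_cons, List.prod_cons]
    constructor
    · rw [add_pow_sq_zero x _ hx hxc, h2, h1, zero_add, mul_smul_comm, smul_smul,
        Nat.factorial_succ]
    · rw [add_pow_sq_zero x _ hx hxc, h2, pow_succ, h2]
      simp

theorem Xtop (k n : ℕ) : trPhi k n ^ (k * n) = ((k * n).factorial : ℝ) • T k n := by
  let L : List (EE k n) := ((List.finRange n).map (fun s =>
    ((List.finRange k).map (fun j => ψ k n s j * ψb k n s j)))).flatten
  have hlen : L.length = k * n := by
    simp [L, List.length_flatten, Function.comp_def, mul_comm]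
  have hprod : L.prod = T k n := by
    simp [L, List.prod_flatten, T, Function.comp_def]
  have hsum : L.sum = trPhi k n := by
    simp only [L, List.sum_flatten, List.map_map, Function.comp_def, trPhi, ω]
    rw [Finset.sum_comm]
    simp only [← List.sum_ofFn, List.ofFn_eq_map]
  have hmem : ∀ x ∈ L, ∃ s j, x = ψ k n s j * ψb k n s j := by
    intro x hx
    simp only [L, List.mem_flatten, List.mem_map] at hx
    obtain ⟨_, ⟨s, _, rfl⟩, hx⟩ := hx
    obtain ⟨j, _, rfl⟩ := List.mem_map.mp hx
    exact ⟨s, j, rfl⟩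
  have hc : ∀ x ∈ L, ∀ y, x * y = y * x := by
    intro x hx y
    obtain ⟨s, j, rfl⟩ := hmem x hx
    exact pair_comm k n _ _ y
  have h0 : ∀ x ∈ L, x * x = 0 := by
    intro x hx
    obtain ⟨s, j, rfl⟩ := hmem x hx
    have h : ψ k n s j * ψ k n s j = 0 := ExteriorAlgebra.ι_sq_zero _
    have := pair_comm k n (Pi.single (Sum.inl (s, j)) 1) (Pi.single (Sum.inr (s, j)) 1) (ψ k n s j)
    change ψ k n s j * ψb k n s j * ψ k n s j = ψ k n s j * (ψ k n s j * ψb k n s j) at this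
    rw [← mul_assoc, this, ← mul_assoc, h, zero_mul, zero_mul]
  have := (list_pow L h0 hc).1
  rw [hlen, hprod, hsum] at this
  rw [this, Nat.cast_smul_eq_nsmul]

/-- Square of Φ. -/
def P2 (k n : ℕ) (i j : Fin k) : EE k n := ∑ l, ω k n i l * ω k n l j

/-- tr Φ³ -/
def trPhi3 (k n : ℕ) : EE k n := ∑ i, ∑ j, ω k n i j * P2 k n j i

theorem DD_P2 (k n : ℕ) (i j : Fin k) :
    ∑ i, ∑ j, DD k n i j (P2 k n j i) = (k : ℝ) • trPhi2 k n + trPhi k n * trPhi k n := by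
  simp only [P2, map_sum, DD_ω_mul, DD_ω, Finset.sum_add_distrib, if_true, one_smul]
  congr 1
  · simp only [Finset.sum_const, Finset.card_univ, Fintype.card_fin, trPhi2,
      Finset.smul_sum, Nat.cast_smul_eq_nsmul]
  · simp only [mul_ite, mul_zero, ite_smul, one_smul, zero_smul, Finset.sum_ite_eq',
      Finset.mem_univ, if_true, trPhi, Finset.mul_sum, Finset.sum_mul]

theorem DD_trPhi2 (k n : ℕ) (i j : Fin k) :
    DD k n i j (trPhi2 k n) = (2 : ℝ) • P2 k n i j := by
  simp only [trPhi2, map_sum, DD_ω_mul, DD_ω, Finset.sum_add_distrib, mul_smul_comm, ite_smul,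
    one_smul, zero_smul, two_smul]
  congr 1
  · rw [Finset.sum_comm]
    simp [P2]
  · simp only [mul_ite, mul_zero, Finset.sum_ite_eq', Finset.mem_univ, if_true, P2]
    exact Finset.sum_congr rfl fun l _ => ω_comm k n _ _ _

theorem P2_mem (k n : ℕ) (i j : Fin k) : P2 k n i j ∈ ⋀[ℝ]^(2 * 2) (V k n) :=
  Submodule.sum_mem _ fun s _ => mul_mem' k n 2 2 (ω_mem k n _ _) (ω_mem k n _ _)

theorem trPhi2_mem (k n : ℕ) : trPhi2 k n ∈ ⋀[ℝ]^4 (V k n) :=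
  Submodule.sum_mem _ fun s _ => P2_mem k n s s

/-- Summed rule. -/
theorem rule_sum (k n m r : ℕ) (hmr : m + 1 + r = k * n) (Y : Fin k → Fin k → EE k n)
    (hy : ∀ i j, Y i j ∈ ⋀[ℝ]^(2 * r) (V k n)) :
    ((m : ℝ) + 1) • (trPhi k n ^ m * (∑ i, ∑ j, ω k n i j * Y j i)) =
      trPhi k n ^ (m + 1) * ((n : ℝ) • (∑ i, Y i i) - ∑ i, ∑ j, DD k n i j (Y j i)) := by
  simp only [Finset.mul_sum, Finset.smul_sum]
  simp only [rule k n m r hmr _ _ _ (hy _ _)]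
  simp only [← Finset.mul_sum, Finset.sum_sub_distrib]
  congr 2
  simp [ite_smul]

theorem eq1 (k n m : ℕ) (h : m + 2 = k * n) :
    ((m : ℝ) + 1) • (trPhi k n ^ m * trPhi2 k n) =
      ((n : ℝ) - k) • trPhi k n ^ (m + 2) := by
  have := rule_sum k n m 1 (by omega) (fun i j => ω k n i j) (fun i j => ω_mem k n i j)
  refine this.trans ?_
  simp only [DD_ω, if_true, one_smul, Finset.sum_const, Finset.card_univ, Fintype.card_fin,
    ← Finset.smul_sum, ← Nat.cast_smul_eq_nsmul ℝ]
  change _ * ((n : ℝ) • trPhi k n - (k : ℝ) • trPhi k n) = _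
  rw [← sub_smul, mul_smul_comm, ← pow_succ]

theorem eq2 (k n m : ℕ) (h : m + 3 = k * n) (hk : 1 ≤ k) :
    ((m : ℝ) + 1) • (trPhi k n ^ m * trPhi3 k n) =
      ((n : ℝ) - k) • (trPhi k n ^ (m + 1) * trPhi2 k n) - trPhi k n ^ (m + 3) := by
  have := rule_sum k n m 2 (by omega) (fun i j => P2 k n i j) (fun i j => P2_mem k n i j)
  refine this.trans ?_
  rw [DD_P2 k n ⟨0, hk⟩ ⟨0, hk⟩]
  change _ * ((n : ℝ) • trPhi2 k n - _) = _
  rw [← sub_sub, ← sub_smul, mul_sub, mul_smul_comm, ← mul_assoc, ← pow_succ, ← pow_succ]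

theorem eq3 (k n m : ℕ) (h : m + 4 = k * n) :
    ((m : ℝ) + 1) • (trPhi k n ^ m * trPhi2 k n ^ 2) =
      ((n : ℝ) - k) • (trPhi k n ^ (m + 2) * trPhi2 k n)
        - (2 : ℝ) • (trPhi k n ^ (m + 1) * trPhi3 k n) := by
  have := rule_sum k n m 3 (by omega) (fun i j => ω k n i j * trPhi2 k n)
    (fun i j => mul_mem' k n 2 4 (ω_mem k n i j) (trPhi2_mem k n))
  simp only [← mul_assoc (ω k n _ _) (ω k n _ _), ← Finset.sum_mul] at this
  rw [pow_two]
  refine this.trans ?_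
  simp only [DD_ω_mul, DD_trPhi2, if_true, one_smul, Finset.sum_add_distrib, Finset.sum_const,
    Finset.card_univ, Fintype.card_fin, ← Finset.smul_sum, ← Nat.cast_smul_eq_nsmul ℝ,
    mul_smul_comm, ← Finset.sum_mul]
  have h3 : ∑ i, ∑ j, ω k n j i * P2 k n i j = trPhi3 k n := by
    rw [Finset.sum_comm]; rfl
  rw [h3]
  change _ * ((n : ℝ) • (trPhi k n * _) - ((k : ℝ) • (trPhi k n * _) + _)) = _
  rw [← sub_sub, ← sub_smul, mul_sub, mul_smul_comm, mul_smul_comm, ← mul_assoc, ← pow_succ]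

/-- `(tr Φ)^{kn−4} ∧ (tr(Φ²))²
  = (kn−4)! · k · n · [k n³ − 2 n² (k²+2) + n (k³+10k) − 4k² − 2] · T`
(the fermion integral `P₂`). -/
theorem P2_eval (k N n : ℕ) (hk : 1 ≤ k) (hN : k < N) (hn : n = N - k)
    (hkn : 4 ≤ k * n) :
    (trPhi k n) ^ (k * n - 4) * (trPhi2 k n) ^ 2 =
      (((k * n - 4).factorial : ℝ) * (k : ℝ) * (n : ℝ) *
        ((k : ℝ) * (n : ℝ) ^ 3 - 2 * (n : ℝ) ^ 2 * ((k : ℝ) ^ 2 + 2)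
          + (n : ℝ) * ((k : ℝ) ^ 3 + 10 * (k : ℝ)) - 4 * (k : ℝ) ^ 2 - 2)) •
        T k n := by
  clear hN hn
  obtain ⟨m, hm⟩ : ∃ m, m + 4 = k * n := ⟨k * n - 4, by omega⟩
  have hm' : k * n - 4 = m := by omega
  rw [hm']
  have hK : (k : ℝ) * n = m + 4 := by exact_mod_cast hm.symm
  have e0 := Xtop k n
  rw [← hm] at e0
  have e1 := eq1 k n (m + 2) (by omega)
  have e2 := eq2 k n (m + 1) (by omega) hk
  have e3 := eq3 k n m hm
  simp only [add_assoc, Nat.reduceAdd] at e1 e2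
  have hf : ((m + 4).factorial : ℝ) =
      ((m : ℝ) + 4) * (m + 3) * (m + 2) * (m + 1) * m.factorial := by
    simp only [Nat.factorial_succ]; push_cast; ring
  rw [hf] at e0
  rw [e0] at e1 e2
  have p1 : (m : ℝ) + 1 ≠ 0 := by positivity
  have p2 : (m : ℝ) + 2 ≠ 0 := by positivity
  have p3 : (m : ℝ) + 3 ≠ 0 := by positivity
  have s1 : trPhi k n ^ (m + 2) * trPhi2 k n =
      (((n : ℝ) - k) * (m + 4) * (m + 2) * (m + 1) * m.factorial) • T k n := by
    refine smul_right_injective _ p3 ?_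
    dsimp only
    push_cast at e1
    rw [show (m : ℝ) + 3 = m + 2 + 1 by ring, e1]
    module
  rw [s1] at e2 e3
  have s2 : trPhi k n ^ (m + 1) * trPhi3 k n =
      ((m + 4) * (m + 1) * m.factorial * (((n : ℝ) - k) ^ 2 - (m + 3))) • T k n := by
    refine smul_right_injective _ p2 ?_
    dsimp only
    push_cast at e2
    rw [show (m : ℝ) + 2 = m + 1 + 1 by ring, e2]
    module
  rw [s2] at e3
  refine smul_right_injective _ p1 ?_
  dsimp only
  rw [e3, smul_smul, smul_smul, smul_smul, ← sub_smul]
  congr 1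
  have hm2 : (m : ℝ) = k * n - 4 := by linarith
  generalize (m.factorial : ℝ) = f
  rw [hm2]
  ring
end
end

section
/- Let k, N be natural numbers with 1 ≤ k < N, n := N − k, and assume kn ≥ 4. Then in Λ(V): Σ_{a ≠ b} Σ_{i ≠ j} (tr Φ)^{kn−4} ∧ ω^{ab} ∧ ω^{ba} ∧ ω^{ij} ∧ ω^{ji} = (kn−4)! · k · n · [4(k−1)²(n−1) + (k−1)(k−2)(k−3)n] · T, where both sums are over ordered pairs of distinct indices in {1, …, k}. (This is the evaluation of Q₃ = Σ_{a≠b} Σ_{i≠j} ∫Dψ (tr Φ)^{kN−k²−4} ω^{ab} ω^{ba} ω^{ij} ω^{ji}.) -/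
noncomputable section

section aux
open Finset

theorem aux_swap {R I : Type*} [CommRing R] (y : I → I → R)
    (hy : ∀ p q p' q', y p q * y p' q' = - (y p q' * y p' q))
    {m : ℕ} (p q : Fin m → I) (a b : Fin m) (hab : a ≠ b) :
    ∏ i, y (p i) (q (Equiv.swap a b i)) = - ∏ i, y (p i) (q i) := by
  have hb : b ∈ (univ : Finset (Fin m)).erase a := by simp [hab.symm]
  rw [← Finset.mul_prod_erase univ _ (mem_univ a), ← Finset.mul_prod_erase univ (fun i => y (p i) (q i)) (mem_univ a),
    ← Finset.mul_prod_erase _ _ hb, ← Finset.mul_prod_erase _ (fun i => y (p i) (q i)) hb]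
  rw [Equiv.swap_apply_left, Equiv.swap_apply_right, ← mul_assoc, ← mul_assoc, hy (p a) (q b), neg_mul]
  congr 2
  refine Finset.prod_congr rfl fun i hi => ?_
  simp only [mem_erase] at hi
  rw [Equiv.swap_apply_of_ne_of_ne hi.2.1 hi.1]

theorem aux_perm {R I : Type*} [CommRing R] (y : I → I → R)
    (hy : ∀ p q p' q', y p q * y p' q' = - (y p q' * y p' q))
    {m : ℕ} (p : Fin m → I) (σ : Equiv.Perm (Fin m)) : ∀ q : Fin m → I,
    ∏ i, y (p i) (q (σ i)) = (((Equiv.Perm.sign σ : ℤˣ) : ℤ) : R) * ∏ i, y (p i) (q i) := by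
  induction σ using Equiv.Perm.swap_induction_on with
  | one => simp
  | swap_mul f x y' hxy ih =>
    intro q
    have := ih (fun i => q (Equiv.swap x y' i))
    simp only [Equiv.Perm.mul_apply]
    rw [this, aux_swap y hy p q x y' hxy]
    simp [Equiv.Perm.sign_swap hxy]

/-- powers of a sum of square-zero commuting elements -/
theorem aux_pow {R I : Type*} [CommRing R] [DecidableEq I] (x : I → R) (hx : ∀ p, x p * x p = 0)
    (B : Finset I) : ∀ d : ℕ, (∑ p ∈ B, x p) ^ (#B + d) =
      if d = 0 then ((#B).factorial : R) * ∏ p ∈ B, x p else 0 := by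
  induction B using Finset.induction_on with
  | empty => intro d; by_cases h : d = 0 <;> simp [h]
  | insert a s ha ih =>
    intro d
    have key : ∀ M : ℕ, (x a + ∑ p ∈ s, x p) ^ (M+1) = (∑ p ∈ s, x p) ^ (M+1) + (M+1) * x a * (∑ p ∈ s, x p) ^ M := by
      intro M
      induction M with
      | zero => simp; ring
      | succ M ihM =>
        rw [pow_succ, ihM]
        push_cast
        linear_combination ((M:R)+1) * (∑ p ∈ s, x p) ^ M * hx a
    rw [Finset.sum_insert ha, Finset.card_insert_of_notMem ha, Finset.prod_insert ha,
      show #s + 1 + d = #s + d + 1 by ring, key, ih d, show #s + d + 1 = #s + (d+1) by ring, ih (d+1)]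
    by_cases h : d = 0
    · subst h; simp [Nat.factorial_succ]; ring
    · simp [h]

theorem aux_wick {R I : Type*} [CommRing R] [Algebra ℝ R] [Fintype I] [DecidableEq I] (y : I → I → R)
    (hy : ∀ p q p' q', y p q * y p' q' = - (y p q' * y p' q))
    {m : ℕ} (p q : Fin m → I) (hm : m ≤ Fintype.card I) :
    (∑ r, y r r) ^ (Fintype.card I - m) * ∏ i, y (p i) (q i) =
      (((Fintype.card I - m).factorial : ℝ) * (Matrix.of fun i j => if p i = q j then (1:ℝ) else 0).det) •
        ∏ r, y r r := by
  have half : ∀ z : R, z = -z → z = 0 := by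
    intro z hz
    have h2 : (2:ℝ) • z = 0 := by rw [two_smul]; nth_rewrite 2 [hz]; simp
    simpa using h2
  have hrow : ∀ r s t, y r s * y r t = 0 := by
    intro r s t; apply half; nth_rewrite 1 [hy]; rw [mul_comm]
  have hcol : ∀ r s t, y s r * y t r = 0 := by
    intro r s t; apply half; nth_rewrite 1 [hy]; rfl
  have hz : ∀ i (w : R), w * y (p i) (q i) = 0 → w * ∏ i, y (p i) (q i) = 0 := by
    intro i w h
    rw [← Finset.mul_prod_erase univ _ (mem_univ i), ← mul_assoc, h, zero_mul]
  by_cases hp : Function.Injective p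
  swap
  · simp only [Function.Injective, not_forall] at hp
    obtain ⟨i, j, hij, hne⟩ := hp
    have h1 : ∏ i, y (p i) (q i) = 0 := by
      have hj : j ∈ (univ : Finset (Fin m)).erase i := by simp [Ne.symm hne]
      rw [← Finset.mul_prod_erase univ _ (mem_univ i), ← Finset.mul_prod_erase _ _ hj, ← mul_assoc, hij, hrow, zero_mul]
    rw [h1, Matrix.det_zero_of_row_eq hne]
    · simp
    · ext l; simp [hij]
  set A : Finset I := univ.image p ∪ univ.image q with hA
  have hcp : #(univ.image p) = m := by rw [Finset.card_image_of_injective _ hp]; simp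
  have hAz : ∀ r ∈ A, y r r * ∏ i, y (p i) (q i) = 0 := by
    intro r hr
    simp only [hA, mem_union, mem_image, mem_univ, true_and] at hr
    rcases hr with ⟨i, rfl⟩ | ⟨i, rfl⟩
    · exact hz i _ (hrow _ _ _)
    · exact hz i _ (hcol _ _ _)
  have hsplit : (∑ r, y r r) = ∑ r ∈ A, y r r + ∑ r ∈ Aᶜ, y r r := (Finset.sum_add_sum_compl A _).symm
  have hpow : ∀ M : ℕ, (∑ r, y r r) ^ M * ∏ i, y (p i) (q i) = (∑ r ∈ Aᶜ, y r r)^M * ∏ i, y (p i) (q i) := by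
    intro M
    have hA0 : (∑ r ∈ A, y r r) * ∏ i, y (p i) (q i) = 0 := by
      rw [Finset.sum_mul]; exact Finset.sum_eq_zero hAz
    induction M with
    | zero => simp
    | succ M ih =>
      rw [pow_succ, pow_succ, mul_right_comm, ih, hsplit]
      linear_combination (∑ r ∈ Aᶜ, y r r)^M * hA0
  rw [hpow]
  have hcc : #Aᶜ = Fintype.card I - #A := Finset.card_compl A
  have hAge : m ≤ #A := hcp ▸ Finset.card_le_card Finset.subset_union_left
  have hAle : #A ≤ Fintype.card I := Finset.card_le_univ A
  by_cases hq : ∀ j, ∃ i, p i = q j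
  · have hAeq : A = univ.image p := by
      rw [hA, Finset.union_eq_left]
      intro r hr
      simp only [mem_image, mem_univ, true_and] at hr ⊢
      obtain ⟨j, rfl⟩ := hr
      exact hq j
    choose f hf using hq
    have hM : Fintype.card I - m = #Aᶜ + 0 := by rw [hcc, hAeq, hcp]; rfl
    rw [hM, aux_pow (fun r => y r r) (fun r => hrow _ _ _)]
    simp only [if_true, add_zero]
    by_cases hfi : Function.Injective f
    · let σ : Equiv.Perm (Fin m) := Equiv.ofBijective f (Finite.injective_iff_bijective.mp hfi)
      have hσ : ∀ i, q i = p (σ i) := fun i => (hf i).symm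
      simp only [hσ]
      rw [aux_perm y hy p σ p]
      have hdet : (Matrix.of fun i j => if p i = p (σ j) then (1:ℝ) else 0).det = ((Equiv.Perm.sign σ : ℤ) : ℝ) := by
        have : (Matrix.of fun i j => if p i = p (σ j) then (1:ℝ) else 0) = (1 : Matrix (Fin m) (Fin m) ℝ).submatrix id σ := by
          ext i j
          simp [Matrix.one_apply, hp.eq_iff]
        rw [this, Matrix.det_permute']; simp
      rw [hdet]
      have hT : ∏ r, y r r = (∏ r ∈ Aᶜ, y r r) * ∏ i, y (p i) (p i) := by
        rw [← Finset.prod_compl_mul_prod A, hAeq, Finset.prod_image (fun _ _ _ _ h => hp h)]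
      rw [hT, Algebra.smul_def]
      simp
      ring
    · simp only [Function.Injective, not_forall] at hfi
      obtain ⟨i, j, hij, hne⟩ := hfi
      have hqq : q i = q j := by rw [← hf, ← hf, hij]
      have h1 : ∏ i, y (p i) (q i) = 0 := by
        have hj : j ∈ (univ : Finset (Fin m)).erase i := by simp [Ne.symm hne]
        rw [← Finset.mul_prod_erase univ _ (mem_univ i), ← Finset.mul_prod_erase _ _ hj, ← mul_assoc, hqq, hcol, zero_mul]
      rw [h1, Matrix.det_zero_of_column_eq hne]
      · simp
      · intro l; simp [hqq]
  · push Not at hq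
    obtain ⟨j, hj⟩ := hq
    have hlt : m < #A := by
      rw [← hcp]
      apply Finset.card_lt_card
      refine ⟨Finset.subset_union_left, fun h => ?_⟩
      have : q j ∈ univ.image p := h (by simp [hA])
      simp at this
      obtain ⟨i, hi⟩ := this
      exact hj i hi
    obtain ⟨d, hd, hd0⟩ : ∃ d, Fintype.card I - m = #Aᶜ + d ∧ d ≠ 0 := ⟨#A - m, by omega, by omega⟩
    rw [Matrix.det_eq_zero_of_column_eq_zero j (by intro i; simp [hj i])]
    rw [hd, aux_pow (fun r => y r r) (fun r => hrow _ _ _)]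
    simp [hd0]

theorem aux_det4 (M : Matrix (Fin 4) (Fin 4) ℝ) (h0 : M 0 0 = 0) (h1 : M 1 1 = 0) (h2 : M 2 2 = 0) (h3 : M 3 3 = 0) :
    M.det = M 0 1 * M 1 0 * M 2 3 * M 3 2 + M 0 2 * M 2 0 * M 1 3 * M 3 1 + M 0 3 * M 3 0 * M 1 2 * M 2 1
      - M 0 1 * M 1 2 * M 2 3 * M 3 0 - M 0 1 * M 1 3 * M 3 2 * M 2 0
      - M 0 2 * M 2 3 * M 3 1 * M 1 0 - M 0 3 * M 3 2 * M 2 1 * M 1 0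
      - M 0 2 * M 2 1 * M 1 3 * M 3 0 - M 0 3 * M 3 1 * M 1 2 * M 2 0 := by
  simp only [Matrix.det_succ_row_zero, Fin.sum_univ_succ, Matrix.submatrix_apply, Matrix.of_apply]
  simp [Fin.succAbove, h0, h1, h2, h3, Fin.lt_def]
  ring

theorem aux_det {k n : ℕ} (s t u v : Fin n) (a b i j : Fin k) (hab : a ≠ b) (hij : i ≠ j) :
  (Matrix.of fun x z : Fin 4 => if (![(s,a),(t,b),(u,i),(v,j)] x) = (![(s,b),(t,a),(u,j),(v,i)] z) then (1:ℝ) else 0).det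
   = (if s = t then 1 else 0) * (if u = v then 1 else 0)
    + (if s = u then 1 else 0) * (if t = v then 1 else 0) * (if a = j then 1 else 0) * (if b = i then 1 else 0)
    + (if s = v then 1 else 0) * (if t = u then 1 else 0) * (if a = i then 1 else 0) * (if b = j then 1 else 0)
    - (if s = t then 1 else 0) * (if s = u then 1 else 0) * (if s = v then 1 else 0) *
      ((if b = j then 1 else 0) + (if b = i then 1 else 0) + (if a = j then 1 else 0) + (if a = i then 1 else 0)) := by
  rw [aux_det4 _ (by simp [hab]) (by simp [hab.symm]) (by simp [hij]) (by simp [hij.symm])]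
  simp only [Matrix.of_apply, Matrix.cons_val, Prod.mk.injEq]
  have hor2 : ∀ (P Q : Prop) [Decidable P] [Decidable Q],
      (if P then (1:ℝ) else 0) * (if Q then (1:ℝ) else 0) = if P ∧ Q then 1 else 0 := by
    intro P Q _ _
    by_cases P <;> by_cases Q <;> simp_all
  simp only [mul_add, hor2]
  have q : ∀ (x1 x2 x3 x4 x5 x6 x7 x8 x9 y1 y2 y3 y4 y5 y6 y7 : ℝ), x1 = y1 → x2 = y2 → x3 = y3 →
     x4 = y4 → x5 = y5 → x6 = y6 → x7 = y7 → x8 = 0 → x9 = 0 →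
     x1 + x2 + x3 - x4 - x5 - x6 - x7 - x8 - x9 = y1 + y2 + y3 - (y4 + y5 + y6 + y7) := by
    intros; subst_vars; ring
  apply q
  iterate 7 (refine if_congr ?_ rfl rfl; grind)
  · exact if_neg (by grind)
  · exact if_neg (by grind)

theorem aux_sum {k n : ℕ} :
  (∑ a : Fin k, ∑ b : Fin k, ∑ i : Fin k, ∑ j : Fin k, if a = b ∨ i = j then (0:ℝ) else
    ∑ s : Fin n, ∑ t : Fin n, ∑ u : Fin n, ∑ v : Fin n,
   ((if s = t then 1 else 0) * (if u = v then 1 else 0)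
    + (if s = u then 1 else 0) * (if t = v then 1 else 0) * (if a = j then 1 else 0) * (if b = i then 1 else 0)
    + (if s = v then 1 else 0) * (if t = u then 1 else 0) * (if a = i then 1 else 0) * (if b = j then 1 else 0)
    - (if s = t then 1 else 0) * (if s = u then 1 else 0) * (if s = v then 1 else 0) *
      ((if b = j then 1 else 0) + (if b = i then 1 else 0) + (if a = j then 1 else 0) + (if a = i then 1 else 0))))
   = (k : ℝ) * (n : ℝ) *
        (4 * ((k : ℝ) - 1) ^ 2 * ((n : ℝ) - 1)
          + ((k : ℝ) - 1) * ((k : ℝ) - 2) * ((k : ℝ) - 3) * (n : ℝ)) := by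
  have h1 : ∀ a b i j : Fin k, (if a = b ∨ i = j then (0:ℝ) else
    ∑ s : Fin n, ∑ t : Fin n, ∑ u : Fin n, ∑ v : Fin n,
   ((if s = t then 1 else 0) * (if u = v then 1 else 0)
    + (if s = u then 1 else 0) * (if t = v then 1 else 0) * (if a = j then 1 else 0) * (if b = i then 1 else 0)
    + (if s = v then 1 else 0) * (if t = u then 1 else 0) * (if a = i then 1 else 0) * (if b = j then 1 else 0)
    - (if s = t then 1 else 0) * (if s = u then 1 else 0) * (if s = v then 1 else 0) *
      ((if b = j then 1 else 0) + (if b = i then 1 else 0) + (if a = j then 1 else 0) + (if a = i then 1 else 0))))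
    = (1 - if a = b then 1 else 0) * (1 - if i = j then 1 else 0) * ((n:ℝ)^2 
      + n^2 * ((if a = j then 1 else 0) * (if b = i then 1 else 0) + (if a = i then 1 else 0) * (if b = j then 1 else 0))
      - n * ((if b = j then 1 else 0) + (if b = i then 1 else 0) + (if a = j then 1 else 0) + (if a = i then 1 else 0))) := by
    intro a b i j
    by_cases hab : a = b
    · simp [hab]
    by_cases hij : i = j
    · simp [hij]
    simp only [hab, hij, or_self, if_false, sum_add_distrib, sum_sub_distrib, ← Finset.sum_mul, ← Finset.mul_sum]
    simp [← Finset.sum_mul, ← Finset.mul_sum]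
    split_ifs <;> ring
  simp only [h1]
  simp only [mul_add, mul_sub, sub_mul, add_mul, mul_one, one_mul, sum_add_distrib, sum_sub_distrib, ← Finset.sum_mul, ← Finset.mul_sum]
  simp [← Finset.sum_mul, ← Finset.mul_sum]
  ring

theorem aux_exp {R J : Type*} [CommRing R] [Fintype J] (P : R) (f g h l : J → R) :
    P * (∑ s, f s) * (∑ s, g s) * (∑ s, h s) * (∑ s, l s) =
      ∑ s, ∑ t, ∑ u, ∑ v, P * f s * g t * h u * l v := by
  simp only [← Finset.mul_sum, ← Finset.sum_mul]

theorem aux_smul {R J : Type*} [CommRing R] [Algebra ℝ R] [Fintype J] (c : ℝ) (f : J → ℝ) (P : R) :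
    (c * ∑ i, f i) • P = ∑ i, (c * f i) • P := by
  rw [Finset.mul_sum, Finset.sum_smul]

theorem aux_comm {R : Type*} [CommRing R] [Algebra ℝ R] (k n : ℕ) (hkn : 4 ≤ k * n)
    (y : Fin n × Fin k → Fin n × Fin k → R)
    (hy : ∀ p q p' q', y p q * y p' q' = - (y p q' * y p' q)) :
    (∑ a : Fin k, ∑ b : Fin k, ∑ i : Fin k, ∑ j : Fin k,
        if a = b ∨ i = j then 0 else
          (∑ i, ∑ s, y (s,i) (s,i)) ^ (k * n - 4) * (∑ s, y (s,a) (s,b)) * (∑ s, y (s,b) (s,a)) *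
            (∑ s, y (s,i) (s,j)) * (∑ s, y (s,j) (s,i))) =
      (((k * n - 4).factorial : ℝ) * (k : ℝ) * (n : ℝ) *
        (4 * ((k : ℝ) - 1) ^ 2 * ((n : ℝ) - 1)
          + ((k : ℝ) - 1) * ((k : ℝ) - 2) * ((k : ℝ) - 3) * (n : ℝ))) • ∏ s, ∏ i, y (s,i) (s,i) := by
  have hc : Fintype.card (Fin n × Fin k) = k * n := by simp [mul_comm]
  have htr : (∑ i, ∑ s, y (s,i) (s,i)) = ∑ r, y r r := by
    rw [Fintype.sum_prod_type_right]
  have hT : ∏ s, ∏ i, y (s,i) (s,i) = ∏ r, y r r := by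
    rw [Fintype.prod_prod_type]
  rw [htr, hT, mul_assoc (_ : ℝ) (k : ℝ) (n : ℝ), mul_assoc (_ : ℝ) ((k : ℝ) * (n : ℝ)), ← aux_sum]
  generalize hP : ∏ r, y r r = P
  rw [aux_smul]
  refine sum_congr rfl fun a _ => ?_
  rw [aux_smul]
  refine sum_congr rfl fun b _ => ?_
  rw [aux_smul]
  refine sum_congr rfl fun i _ => ?_
  rw [aux_smul]
  refine sum_congr rfl fun j _ => ?_
  by_cases h : a = b ∨ i = j
  · rw [if_pos h, if_pos h, mul_zero, zero_smul]
  · rw [if_neg h, if_neg h]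
    push Not at h
    rw [aux_exp]
    rw [aux_smul]
    refine sum_congr rfl fun s _ => ?_
    rw [aux_smul]
    refine sum_congr rfl fun t _ => ?_
    rw [aux_smul]
    refine sum_congr rfl fun u _ => ?_
    rw [aux_smul]
    refine sum_congr rfl fun v _ => ?_
    have := aux_wick y hy (![(s,a),(t,b),(u,i),(v,j)]) (![(s,b),(t,a),(u,j),(v,i)]) (by rw [hc]; exact hkn)
    rw [hc, aux_det s t u v a b i j h.1 h.2, hP] at this
    rw [← this, Fin.prod_univ_four]
    simp only [Matrix.cons_val, mul_assoc]

theorem aux_four {A : Type*} [Ring A] (p q p' q' : A) (h1 : q * p' = -(p' * q)) (h2 : q * q' = -(q' * q))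
    (h3 : q' * p' = -(p' * q')) : (p * q) * (p' * q') = - ((p * q') * (p' * q)) := by
  have e1 : (p * q) * (p' * q') = p * p' * (q' * q) := by
    calc (p * q) * (p' * q') = p * (q * p') * q' := by noncomm_ring
      _ = - (p * p' * (q * q')) := by rw [h1]; noncomm_ring
      _ = _ := by rw [h2]; noncomm_ring
  have e2 : (p * q') * (p' * q) = - (p * p' * (q' * q)) := by
    calc (p * q') * (p' * q) = p * (q' * p') * q := by noncomm_ring
      _ = _ := by rw [h3]; noncomm_ring
  rw [e1, e2, neg_neg]

theorem aux_four_comm {A : Type*} [Ring A] (p q p' q' : A) (h1 : q * p' = -(p' * q)) (h2 : q * q' = -(q' * q))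
    (h3 : p * p' = -(p' * p)) (h4 : p * q' = - (q' * p)) : (p * q) * (p' * q') = (p' * q') * (p * q) := by
  calc (p * q) * (p' * q') = p * (q * p') * q' := by noncomm_ring
    _ = - (p * p' * (q * q')) := by rw [h1]; noncomm_ring
    _ = - (p' * (p * q') * q) := by rw [h2, h3]; noncomm_ring
    _ = _ := by rw [h4]; noncomm_ring

end aux

/-- `∑_{a≠b} ∑_{i≠j} (tr Φ)^{kn−4} ∧ ω^{ab} ∧ ω^{ba} ∧ ω^{ij} ∧ ω^{ji}
  = (kn−4)! · k · n · [4(k−1)²(n−1) + (k−1)(k−2)(k−3)n] · T` (the term `Q₃`). -/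
theorem Q3_eval (k N n : ℕ) (hk : 1 ≤ k) (hN : k < N) (hn : n = N - k)
    (hkn : 4 ≤ k * n) :
    (∑ a : Fin k, ∑ b : Fin k, ∑ i : Fin k, ∑ j : Fin k,
        if a = b ∨ i = j then 0 else
          (trPhi k n) ^ (k * n - 4) * ω k n a b * ω k n b a * ω k n i j * ω k n j i) =
      (((k * n - 4).factorial : ℝ) * (k : ℝ) * (n : ℝ) *
        (4 * ((k : ℝ) - 1) ^ 2 * ((n : ℝ) - 1)
          + ((k : ℝ) - 1) * ((k : ℝ) - 2) * ((k : ℝ) - 3) * (n : ℝ))) • T k n := by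
  clear hk hN hn
  have hanti : ∀ x z : V k n, ExteriorAlgebra.ι ℝ x * ExteriorAlgebra.ι ℝ z = - (ExteriorAlgebra.ι ℝ z * ExteriorAlgebra.ι ℝ x) := by
    intro x z
    exact eq_neg_of_add_eq_zero_left (ExteriorAlgebra.ι_add_mul_swap x z)
  let Y : Fin n × Fin k → Fin n × Fin k → ExteriorAlgebra ℝ (V k n) := fun p q => ψ k n p.1 p.2 * ψb k n q.1 q.2
  have hY : ∀ p q p' q', Y p q * Y p' q' = - (Y p q' * Y p' q) := by
    intro p q p' q'
    exact aux_four _ _ _ _ (hanti _ _) (hanti _ _) (hanti _ _)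
  have hcomm : ∀ p q p' q', Y p q * Y p' q' = Y p' q' * Y p q := by
    intro p q p' q'
    exact aux_four_comm _ _ _ _ (hanti _ _) (hanti _ _) (hanti _ _) (hanti _ _)
  let S : Set (ExteriorAlgebra ℝ (V k n)) := Set.range fun pq : (Fin n × Fin k) × (Fin n × Fin k) => Y pq.1 pq.2
  have hS : ∀ a ∈ S, ∀ b ∈ S, a * b = b * a := by
    rintro _ ⟨⟨p, q⟩, rfl⟩ _ ⟨⟨p', q'⟩, rfl⟩
    exact hcomm _ _ _ _
  letI := Algebra.adjoinCommRingOfComm ℝ hS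
  let y : Fin n × Fin k → Fin n × Fin k → Algebra.adjoin ℝ S :=
    fun p q => ⟨Y p q, Algebra.subset_adjoin ⟨(p, q), rfl⟩⟩
  have hy : ∀ p q p' q', y p q * y p' q' = - (y p q' * y p' q) := by
    intro p q p' q'
    exact Subtype.ext (hY p q p' q')
  have key := congrArg (Algebra.adjoin ℝ S).val (aux_comm k n hkn y hy)
  have hv : ∀ p q, (Algebra.adjoin ℝ S).val (y p q) = Y p q := fun _ _ => rfl
  have hT : (Algebra.adjoin ℝ S).val (∏ s, ∏ i, y (s,i) (s,i)) = T k n := by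
    simp only [Fin.prod_univ_def]
    rw [map_list_prod]
    simp [T, map_list_prod, List.map_map, Function.comp_def, hv, Y]
    rfl
  rw [map_smul, hT] at key
  rw [← key]
  simp only [map_sum, apply_ite (Algebra.adjoin ℝ S).val, map_mul, map_pow, map_zero, hv]
  rfl
end
end

section
/- Let k, N be natural numbers with 2 ≤ k < N and n := N − k ≥ 1, and fix distinct indices i, j ∈ {1, …, k}. Then in Λ(V): (∧_{m ∈ {1,…,k} \ {i,j}} ∧_{l=1}^{n} (ψ_l^m ∧ ψ̄_l^m)) ∧ (ω^{ii} ∧ ω^{jj})^{n−1} ∧ ω^{ij} ∧ ω^{ji} = −n · ((n−1)!)² · T. -/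
noncomputable section

theorem sqz_add_pow {R : Type*} [CommRing R] (p q : R) (hp : p * p = 0) (m : ℕ) :
    (p + q) ^ (m + 1) = q ^ (m + 1) + (m + 1 : R) * (p * q ^ m) := by
  induction m with
  | zero => simp; ring
  | succ m ih =>
    rw [pow_succ, ih]
    push_cast
    linear_combination ((m : R) + 1) * q ^ m * hp

theorem sqz_sum_pow {R ι : Type*} [CommRing R] [DecidableEq ι] (p : ι → R)
    (hp : ∀ s, p s * p s = 0) (S : Finset ι) :
    (∑ s ∈ S, p s) ^ S.card = (S.card.factorial : R) * ∏ s ∈ S, p s := by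
  have key : ∀ S : Finset ι, (∏ s ∈ S, p s) * ∑ s ∈ S, p s = 0 := by
    intro S
    rw [Finset.mul_sum]
    refine Finset.sum_eq_zero fun s hs => ?_
    rw [← Finset.mul_prod_erase S p hs]
    linear_combination (∏ x ∈ S.erase s, p x) * hp s
  induction S using Finset.induction_on with
  | empty => simp
  | insert a S ha ih =>
    rw [Finset.sum_insert ha, Finset.prod_insert ha, Finset.card_insert_of_notMem ha,
      sqz_add_pow _ _ (hp a), pow_succ, ih, Nat.factorial_succ]
    push_cast
    linear_combination (S.card.factorial : R) * key S

theorem kill_pow {R : Type*} [CommRing R] {n : ℕ} (p : Fin n → R)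
    (hp : ∀ s, p s * p s = 0) (a : Fin n) (y : R) (hy : y * p a = 0) :
    y * (∑ s, p s) ^ (n - 1) =
      ((n - 1).factorial : R) * (y * ∏ s ∈ Finset.univ.erase a, p s) := by
  have h1 : ∀ m : ℕ, y * (∑ s, p s) ^ m = y * (∑ s ∈ Finset.univ.erase a, p s) ^ m := by
    intro m
    rw [← Finset.add_sum_erase _ p (Finset.mem_univ a)]
    induction m with
    | zero => simp
    | succ m ih =>
      rw [pow_succ, pow_succ, ← mul_assoc, ih]
      linear_combination (∑ s ∈ Finset.univ.erase a, p s) ^ m * hy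
  have h2 := sqz_sum_pow p hp (Finset.univ.erase a)
  have hc : (Finset.univ.erase a).card = n - 1 := by simp
  rw [hc] at h2
  rw [h1, h2]
  ring

theorem comm_eval {R : Type*} [CommRing R] {n : ℕ} (p q u v : Fin n → R)
    (hp : ∀ s, p s * p s = 0) (hq : ∀ s, q s * q s = 0)
    (hup : ∀ s, u s * p s = 0) (huq : ∀ s, u s * q s = 0)
    (hvp : ∀ s, v s * p s = 0)
    (huv : ∀ s, u s * v s = - (p s * q s)) :
    ((∑ s, p s) * (∑ s, q s)) ^ (n - 1) * (∑ s, u s) * (∑ s, v s) =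
      -(n : R) * ((n - 1).factorial : R) ^ 2 * ((∏ s, p s) * ∏ s, q s) := by
  have h : ∀ a b : Fin n, ((∑ s, p s) * (∑ s, q s)) ^ (n - 1) * (u a * v b) =
      if a = b then -((n - 1).factorial : R) ^ 2 * ((∏ s, p s) * ∏ s, q s) else 0 := by
    intro a b
    have e1 := kill_pow p hp a (u a) (hup a)
    have e2 := kill_pow q hq a (u a) (huq a)
    rw [mul_pow]
    have e3 : (∑ s, p s) ^ (n - 1) * (∑ s, q s) ^ (n - 1) * (u a * v b) =
      ((n - 1).factorial : R) ^ 2 * (u a * v b * (∏ s ∈ Finset.univ.erase a, p s)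
        * (∏ s ∈ Finset.univ.erase a, q s)) := by
      linear_combination (∑ s, q s) ^ (n - 1) * v b * e1 +
        ((n - 1).factorial : R) * (∏ s ∈ Finset.univ.erase a, p s) * v b * e2
    rw [e3]
    split_ifs with hab
    · subst hab
      rw [huv, ← Finset.mul_prod_erase _ p (Finset.mem_univ a),
        ← Finset.mul_prod_erase _ q (Finset.mem_univ a)]
      ring
    · have hb : b ∈ Finset.univ.erase a := by simp [Ne.symm hab]
      rw [← Finset.mul_prod_erase _ p hb]
      linear_combination ((n - 1).factorial : R) ^ 2 * u a *
        (∏ s ∈ (Finset.univ.erase a).erase b, p s) *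
        (∏ s ∈ Finset.univ.erase a, q s) * hvp b
  generalize ((∑ s, p s) * (∑ s, q s)) ^ (n - 1) = W at h ⊢
  rw [mul_assoc, Finset.sum_mul_sum, Finset.mul_sum]
  rw [Finset.sum_congr rfl fun a _ =>
    (Finset.mul_sum _ _ _).trans (Finset.sum_congr rfl fun b _ => h a b)]
  simp
  ring

theorem comm_full {R : Type*} [CommRing R] [Algebra ℝ R] {k n : ℕ} (i j : Fin k) (hij : i ≠ j)
    (x : Fin n → Fin k → Fin k → R)
    (h1 : ∀ s a b c, x s a b * x s a c = 0) (h2 : ∀ s a b c, x s a c * x s b c = 0)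
    (h3 : ∀ s a b, x s a b * x s b a = - (x s a a * x s b b)) :
    (((List.finRange k).filter (fun m => m ≠ i ∧ m ≠ j)).map
        (fun m => ((List.finRange n).map (fun l => x l m m)).prod)).prod *
      ((∑ s, x s i i) * (∑ s, x s j j)) ^ (n - 1) * (∑ s, x s i j) * (∑ s, x s j i) =
      (-(n : ℝ) * (((n - 1).factorial : ℝ)) ^ 2) •
      ((List.finRange n).map (fun s =>
        ((List.finRange k).map (fun j => x s j j)).prod)).prod := by
  have hc := comm_eval (fun s => x s i i) (fun s => x s j j) (fun s => x s i j)
    (fun s => x s j i) (fun s => h1 _ _ _ _) (fun s => h1 _ _ _ _) (fun s => h1 _ _ _ _)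
    (fun s => h2 _ _ _ _) (fun s => h2 _ _ _ _) (fun s => h3 _ _ _)
  rw [mul_assoc, mul_assoc, ← mul_assoc (_ ^ (n - 1)), hc]
  rw [← List.prod_toFinset _ ((List.nodup_finRange k).filter _)]
  simp_rw [← Fin.prod_univ_def]
  rw [Finset.prod_comm (s := (Finset.univ : Finset (Fin n)))]
  have hS : ((List.finRange k).filter (fun m => m ≠ i ∧ m ≠ j)).toFinset =
      (Finset.univ.erase i).erase j := by
    ext m; simp; tauto
  rw [hS, ← Finset.mul_prod_erase Finset.univ _ (Finset.mem_univ i),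
    ← Finset.mul_prod_erase (Finset.univ.erase i) _ (show j ∈ _ by simp [hij.symm]),
    Algebra.smul_def]
  simp only [map_mul, map_neg, map_pow, map_natCast]
  ring

theorem ext_swap {M : Type*} [AddCommGroup M] [Module ℝ M] (a b : M) :
    ExteriorAlgebra.ι ℝ a * ExteriorAlgebra.ι ℝ b =
      - (ExteriorAlgebra.ι ℝ b * ExteriorAlgebra.ι ℝ a) :=
  eq_neg_of_add_eq_zero_left (ExteriorAlgebra.ι_add_mul_swap a b)

theorem ext_center {M : Type*} [AddCommGroup M] [Module ℝ M] (a b : M) :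
    ExteriorAlgebra.ι ℝ a * ExteriorAlgebra.ι ℝ b ∈
      Subalgebra.center ℝ (ExteriorAlgebra ℝ M) := by
  rw [Subalgebra.mem_center_iff]
  intro y
  induction y using ExteriorAlgebra.induction with
  | algebraMap r => exact Algebra.commutes _ _
  | ι v =>
    rw [← mul_assoc, ext_swap v a, neg_mul, mul_assoc, ext_swap v b, mul_neg, neg_neg, mul_assoc]
  | mul y z hy hz => rw [mul_assoc, hz, ← mul_assoc, hy, mul_assoc]
  | add y z hy hz => rw [add_mul, mul_add, hy, hz]

/-- for distinct `i ≠ j`,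
`(∧_{m∉{i,j}} ∧_{l=1}^n ψ_l^m ∧ ψ̄_l^m) ∧ (ω^{ii} ∧ ω^{jj})^{n−1} ∧ ω^{ij} ∧ ω^{ji}
  = −n((n−1)!)² · T`. -/
theorem mixed_term_eval (k N n : ℕ) (hk : 2 ≤ k) (hN : k < N) (hn : n = N - k)
    (hn1 : 1 ≤ n) (i j : Fin k) (hij : i ≠ j) :
    (((List.finRange k).filter (fun m => m ≠ i ∧ m ≠ j)).map
        (fun m => ((List.finRange n).map (fun l => ψ k n l m * ψb k n l m)).prod)).prod *
      (ω k n i i * ω k n j j) ^ (n - 1) * ω k n i j * ω k n j i =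
      (-(n : ℝ) * (((n - 1).factorial : ℝ)) ^ 2) • T k n := by
  let x : Fin n → Fin k → Fin k → Subalgebra.center ℝ (ExteriorAlgebra ℝ (V k n)) :=
    fun s a b => ⟨ψ k n s a * ψb k n s b, ext_center _ _⟩
  have sw : ∀ s a t b, ψb k n s a * ψ k n t b = - (ψ k n t b * ψb k n s a) :=
    fun s a t b => ext_swap _ _
  have sw1 : ∀ s a t b, ψ k n s a * ψ k n t b = - (ψ k n t b * ψ k n s a) :=
    fun s a t b => ext_swap _ _
  have sw2 : ∀ s a t b, ψb k n s a * ψb k n t b = - (ψb k n t b * ψb k n s a) :=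
    fun s a t b => ext_swap _ _
  have sq1 : ∀ s a, ψ k n s a * ψ k n s a = 0 := fun s a => ExteriorAlgebra.ι_sq_zero _
  have sq2 : ∀ s a, ψb k n s a * ψb k n s a = 0 := fun s a => ExteriorAlgebra.ι_sq_zero _
  have re : ∀ s a b c d, ψ k n s a * ψb k n s b * (ψ k n s c * ψb k n s d) =
      - (ψ k n s a * ψ k n s c * (ψb k n s b * ψb k n s d)) := by
    intro s a b c d
    rw [mul_assoc, ← mul_assoc (ψb k n s b), sw, neg_mul, mul_neg]
    simp only [mul_assoc]
  have key := comm_full i j hij x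
    (fun s a b c => Subtype.ext (by
      change ψ k n s a * ψb k n s b * (ψ k n s a * ψb k n s c) = 0
      rw [re, sq1, zero_mul, neg_zero]))
    (fun s a b c => Subtype.ext (by
      change ψ k n s a * ψb k n s c * (ψ k n s b * ψb k n s c) = 0
      rw [re, sq2, mul_zero, neg_zero]))
    (fun s a b => Subtype.ext (by
      change ψ k n s a * ψb k n s b * (ψ k n s b * ψb k n s a) =
        - (ψ k n s a * ψb k n s a * (ψ k n s b * ψb k n s b))
      rw [re, re, sw2 s b s a, mul_neg]))
  have key2 := congrArg (Subalgebra.center ℝ (ExteriorAlgebra ℝ (V k n))).val key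
  simp only [map_mul, map_pow, map_sum, map_list_prod, List.map_map, map_smul,
    Function.comp_def] at key2
  exact key2
end
end
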